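/- Let d ≥ 2, let X ∈ ℝ^{d×d} be nonsingular with all rows of unit Euclidean norm, and let W be Haar-distributed on the orthogonal group O(d). Then: (i) if φ(X) ≤ 1/(16d), then E[ φ(BN(WX)) ] ≤ φ(X)·(1 − 1/(2d²)); and (ii) if φ(X) > 1/(16d), then E[ φ(BN(WX)) ] ≤ φ(X) − 1/(32d³). -/

import Mathlib

open MeasureTheory Matrix

/-- Euclidean norm of the `i`-th row of a square real matrix. -/
noncomputable def rowNorm {d : ℕ} (X : Matrix (Fin d) (Fin d) ℝ) (i : Fin d) : ℝ :=
  Real.sqrt (∑ j, X i j ^ 2)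

/-- Batch normalization (without mean reduction): each row is rescaled to unit norm. -/
noncomputable def BN {d : ℕ} (X : Matrix (Fin d) (Fin d) ℝ) : Matrix (Fin d) (Fin d) ℝ :=
  Matrix.of fun i j => X i j / rowNorm X i

/-- Isometry gap `φ(X) = -log( det(XᵀX)^{1/d} / ((1/d) Tr(XᵀX)) )`. -/
noncomputable def isoGap {d : ℕ} (X : Matrix (Fin d) (Fin d) ℝ) : ℝ :=
  - Real.log ((Xᵀ * X).det ^ ((1 : ℝ) / d) / ((1 / d : ℝ) * (Xᵀ * X).trace))

/-- Isometry `I(X) = exp(-φ(X))`. -/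
noncomputable def isoI {d : ℕ} (X : Matrix (Fin d) (Fin d) ℝ) : ℝ :=
  Real.exp (- isoGap X)

/-- Matrices inherit the (Borel) product measurable structure of `Fin d → Fin d → ℝ`. -/
instance matrixMeasurableSpace {d : ℕ} : MeasurableSpace (Matrix (Fin d) (Fin d) ℝ) :=
  (inferInstance : MeasurableSpace (Fin d → Fin d → ℝ))

/-- `μ` is the Haar probability measure on the orthogonal group `O(d)`, viewed as a
measure on `d × d` real matrices: it is a probability measure, concentrated on the
orthogonal matrices, and invariant under left and right translation by any orthogonal
matrix (these properties characterize the Haar probability measure uniquely). -/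
def IsHaarOrthogonal {d : ℕ} (μ : Measure (Matrix (Fin d) (Fin d) ℝ)) : Prop :=
  IsProbabilityMeasure μ ∧
  (∀ᵐ W ∂μ, Wᵀ * W = 1) ∧
  ∀ U : Matrix (Fin d) (Fin d) ℝ, Uᵀ * U = 1 →
    μ.map (fun W => U * W) = μ ∧ μ.map (fun W => W * U) = μ

/-!
Let `G` be the Gram matrix of the rows of `X`, scaled to have trace `d`. Then `φ(X)` is
`-(1/d) log det G`, and batch normalization adds `(1/d) ∑ᵢ log Gᵢᵢ` to it. As the diagonal of `G`
has mean `1`, the strict concavity of `log` makes this a decrease of at least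
`(∑ᵢ Gᵢᵢ² - d) / (2d²)`. Multiplying `X` by an orthogonal `W` preserves `φ` and conjugates `G` by
`W`, and under Haar measure the expected square of a diagonal entry of `W G Wᵀ` is
`(d² + 2 tr(G²)) / (d(d + 2))`. So the expected decrease is at least
`(tr(G²) - d) / (d²(d + 2))`, and comparing `log` with its second-order expansion at the
eigenvalues of `G` shows `tr(G²) - d ≥ min(1/4, d φ(X))`.
-/

lemma log_le_half_sub_inv {z : ℝ} (hz : 1 ≤ z) : Real.log z ≤ (z - z⁻¹) / 2 := by
  rw [← Real.sinh_log (by linarith)]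
  exact Real.self_le_sinh_iff.2 (Real.log_nonneg hz)

lemma two_mul_sub_one_div_add_one_le_log {z : ℝ} (hz : 1 ≤ z) :
    2 * (z - 1) / (z + 1) ≤ Real.log z := by
  have h := Real.le_log_one_add_of_nonneg (sub_nonneg.2 hz)
  rw [add_sub_cancel] at h
  convert h using 2
  ring

lemma log_le_sub_one_sub_sq_div {z M : ℝ} (hM : 1 ≤ M) (hz : 0 < z) (hzM : z ≤ M) :
    Real.log z ≤ (z - 1) - (z - 1) ^ 2 / (2 * M) := by
  rcases le_total 1 z with h | h
  · calc Real.log z ≤ (z - z⁻¹) / 2 := log_le_half_sub_inv h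
      _ = (z - 1) - (z - 1) ^ 2 / (2 * z) := by field_simp; ring
      _ ≤ (z - 1) - (z - 1) ^ 2 / (2 * M) := by gcongr
  · have hlog := two_mul_sub_one_div_add_one_le_log ((one_le_inv₀ hz).2 h)
    have hcubic : (1 - z) + (z - 1) ^ 2 / 2 ≤ 2 * (1 - z) / (1 + z) := by
      rw [le_div_iff₀ (by positivity)]
      nlinarith [pow_nonneg (sub_nonneg.2 h) 3]
    calc Real.log z = -Real.log z⁻¹ := by rw [Real.log_inv, neg_neg]
      _ ≤ -(2 * (z⁻¹ - 1) / (z⁻¹ + 1)) := neg_le_neg hlog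
      _ = -(2 * (1 - z) / (1 + z)) := by field_simp
      _ ≤ (z - 1) - (z - 1) ^ 2 / (2 * 1) := by linarith
      _ ≤ (z - 1) - (z - 1) ^ 2 / (2 * M) := by gcongr

lemma neg_log_le_of_half_le {z : ℝ} (hz : 1 / 2 ≤ z) :
    -Real.log z ≤ -(z - 1) + (z - 1) ^ 2 := by
  have hz0 : 0 < z := by linarith
  rcases le_total 1 z with h | h
  · have hlog := two_mul_sub_one_div_add_one_le_log h
    have hcubic : (z - 1) - (z - 1) ^ 2 ≤ 2 * (z - 1) / (z + 1) := by
      rw [le_div_iff₀ (by positivity)]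
      nlinarith [mul_nonneg (sq_nonneg (z - 1)) hz0.le]
    linarith
  · have hlog := log_le_half_sub_inv ((one_le_inv₀ hz0).2 h)
    rw [Real.log_inv, inv_inv] at hlog
    have hquot : -(z - 1) + (z - 1) ^ 2 - (z⁻¹ - z) / 2 =
        (1 - z) ^ 2 * (2 * z - 1) / (2 * z) := by
      field_simp
      ring
    have hfactor : 0 ≤ 2 * z - 1 := by linarith
    have hnonneg : 0 ≤ (1 - z) ^ 2 * (2 * z - 1) / (2 * z) := by positivity
    linarith

section RealMatrix

variable {n : Type*} [Fintype n] [DecidableEq n]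

lemma exists_orthogonal_mulVec_eq {v w : n → ℝ} (h : v ⬝ᵥ v = w ⬝ᵥ w) :
    ∃ U : Matrix n n ℝ, Uᵀ * U = 1 ∧ U *ᵥ v = w := by
  let b := EuclideanSpace.basisFun n ℝ
  let R := (Submodule.span ℝ {WithLp.toLp 2 v - WithLp.toLp 2 w})ᗮ.reflection
  have hR : R (WithLp.toLp 2 v) = WithLp.toLp 2 w := by
    refine Submodule.reflection_sub ?_
    simp only [dotProduct, ← pow_two] at h
    simp only [EuclideanSpace.norm_eq, Real.norm_eq_abs, sq_abs, h]
  refine ⟨LinearMap.toMatrix b.toBasis b.toBasis R.toLinearMap,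
    (mem_orthogonalGroup_iff' n ℝ).1 (R.toMatrix_mem_unitaryGroup b b), ?_⟩
  have hrepr := LinearMap.toMatrix_mulVec_repr b.toBasis b.toBasis R.toLinearMap (WithLp.toLp 2 v)
  have hcoord (x : EuclideanSpace ℝ n) : ⇑(b.toBasis.repr x) = x.ofLp := by
    ext i
    simp [b]
  have hRv : R.toLinearMap (WithLp.toLp 2 v) = WithLp.toLp 2 w := hR
  rwa [hRv, hcoord, hcoord] at hrepr

variable {A : Matrix n n ℝ}

lemma posDef_mul_transpose (hA : A.det ≠ 0) : (A * Aᵀ).PosDef := by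
  have hunit : IsUnit A := (isUnit_iff_isUnit_det A).2 (isUnit_iff_ne_zero.2 hA)
  simpa using PosDef.mul_conjTranspose_self A (vecMul_injective_of_isUnit hunit)

lemma exists_orthogonal_diagonal (hA : A.IsHermitian) :
    ∃ U : Matrix n n ℝ, Uᵀ * U = 1 ∧ A = U * diagonal hA.eigenvalues * Uᵀ :=
  ⟨hA.eigenvectorUnitary,
    by simpa [star_eq_conjTranspose] using UnitaryGroup.star_mul_self hA.eigenvectorUnitary,
    by simpa [Unitary.conjStarAlgAut_apply, star_eq_conjTranspose, Function.comp_def]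
      using hA.spectral_theorem⟩

lemma trace_mul_self_eq_sum_eigenvalues_sq (hA : A.IsHermitian) :
    (A * A).trace = ∑ k, hA.eigenvalues k ^ 2 := by
  obtain ⟨U, hU, hAU⟩ := exists_orthogonal_diagonal hA
  calc (A * A).trace
      = (U * (diagonal hA.eigenvalues * (Uᵀ * U) * diagonal hA.eigenvalues) * Uᵀ).trace := by
        conv_lhs => rw [hAU]
        simp only [Matrix.mul_assoc]
    _ = (diagonal hA.eigenvalues * diagonal hA.eigenvalues).trace := by
        rw [trace_mul_comm, ← Matrix.mul_assoc, hU, Matrix.one_mul, Matrix.mul_one]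
    _ = ∑ k, hA.eigenvalues k ^ 2 := by
        simp only [diagonal_mul_diagonal, trace_diagonal, pow_two]

lemma exists_orthonormal_diag_conj_eq_sum {m : Type*} (hA : A.IsHermitian) :
    ∃ u : n → n → ℝ, (∀ k l, u k ⬝ᵥ u l = if k = l then 1 else 0) ∧
      ∀ (W : Matrix m n ℝ) (i : m),
        (W * A * Wᵀ) i i = ∑ k, hA.eigenvalues k * (W *ᵥ u k) i ^ 2 := by
  obtain ⟨U, hU, hAU⟩ := exists_orthogonal_diagonal hA
  refine ⟨U.col, fun k l => ?_, fun W i => ?_⟩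
  · rw [← one_apply, ← hU]
    rfl
  · have hconj : W * A * Wᵀ = W * U * diagonal hA.eigenvalues * (W * U)ᵀ := by
      conv_lhs => rw [hAU]
      simp only [transpose_mul, Matrix.mul_assoc]
    have hcol (k : n) : (W *ᵥ U.col k) i = (W * U) i k := rfl
    rw [hconj, mul_apply]
    refine Finset.sum_congr rfl fun k _ => ?_
    rw [mul_diagonal, transpose_apply, hcol]
    ring

lemma log_det_le_trace_sub_card (hA : A.PosDef) :
    Real.log A.det ≤ A.trace - Fintype.card n := by
  have hpos := hA.eigenvalues_pos
  calc Real.log A.det = ∑ k, Real.log (hA.isHermitian.eigenvalues k) := by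
        rw [hA.isHermitian.det_eq_prod_eigenvalues]
        exact Real.log_prod fun k _ => (hpos k).ne'
    _ ≤ ∑ k, (hA.isHermitian.eigenvalues k - 1) :=
        Finset.sum_le_sum fun k _ => Real.log_le_sub_one_of_pos (hpos k)
    _ = A.trace - Fintype.card n := by
        rw [hA.isHermitian.trace_eq_sum_eigenvalues]
        simp

lemma min_neg_log_det_le_trace_mul_self_sub_card (hA : A.IsHermitian)
    (htr : A.trace = Fintype.card n) :
    min (1 / 4) (-Real.log A.det) ≤ (A * A).trace - Fintype.card n := by
  set l := hA.eigenvalues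
  have hsum : ∑ k, (l k - 1) = 0 := by
    have h : A.trace = ∑ k, l k := hA.trace_eq_sum_eigenvalues
    simp [← h, htr]
  have hvar : (A * A).trace - Fintype.card n = ∑ k, (l k - 1) ^ 2 := by
    have h (k : n) : (l k - 1) ^ 2 = l k ^ 2 - 1 - 2 * (l k - 1) := by ring
    simp only [h, Finset.sum_sub_distrib, ← Finset.mul_sum] at hsum ⊢
    rw [hsum, trace_mul_self_eq_sum_eigenvalues_sq hA]
    simp [l]
  rw [hvar]
  by_cases h : ∀ k, 1 / 2 ≤ l k
  · refine (min_le_right _ _).trans ?_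
    calc -Real.log A.det = ∑ k, -Real.log (l k) := by
          rw [hA.det_eq_prod_eigenvalues, Finset.sum_neg_distrib]
          congr 1
          exact Real.log_prod fun k _ => ((by norm_num : (0 : ℝ) < 1 / 2).trans_le (h k)).ne'
      _ ≤ ∑ k, (-(l k - 1) + (l k - 1) ^ 2) :=
          Finset.sum_le_sum fun k _ => neg_log_le_of_half_le (h k)
      _ = ∑ k, (l k - 1) ^ 2 := by
          rw [Finset.sum_add_distrib, Finset.sum_neg_distrib, hsum, neg_zero, zero_add]
  · push Not at h
    obtain ⟨k, hk⟩ := h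
    calc min (1 / 4) (-Real.log A.det) ≤ 1 / 4 := min_le_left _ _
      _ ≤ (l k - 1) ^ 2 := by nlinarith
      _ ≤ ∑ k, (l k - 1) ^ 2 :=
          Finset.single_le_sum (f := fun k => (l k - 1) ^ 2) (fun k _ => sq_nonneg _)
            (Finset.mem_univ k)

end RealMatrix

section IsometryGap

variable {d : ℕ} {X : Matrix (Fin d) (Fin d) ℝ}

/-- The Gram matrix of the rows of `X`, rescaled to have trace `d`. It carries all the information
about `X` that matters here: `isoGap X` and `isoGap (BN X)` are functions of it. -/
noncomputable def normalizedGram (X : Matrix (Fin d) (Fin d) ℝ) : Matrix (Fin d) (Fin d) ℝ :=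
  (d / (X * Xᵀ).trace) • (X * Xᵀ)

lemma rowNorm_sq (X : Matrix (Fin d) (Fin d) ℝ) (i : Fin d) :
    rowNorm X i ^ 2 = (X * Xᵀ) i i := by
  rw [rowNorm, Real.sq_sqrt (Finset.sum_nonneg fun j _ => sq_nonneg _)]
  simp only [mul_apply, transpose_apply, pow_two]

lemma rowNorm_ne_zero (hX : X.det ≠ 0) (i : Fin d) : rowNorm X i ≠ 0 := by
  rw [← pow_ne_zero_iff two_ne_zero, rowNorm_sq]
  exact (posDef_mul_transpose hX).diag_pos.ne'

lemma det_BN (X : Matrix (Fin d) (Fin d) ℝ) : (BN X).det = X.det / ∏ i, rowNorm X i := by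
  simp only [BN, div_eq_inv_mul]
  rw [det_mul_column, Finset.prod_inv_distrib]

lemma det_BN_ne_zero (hX : X.det ≠ 0) : (BN X).det ≠ 0 := by
  rw [det_BN]
  exact div_ne_zero hX (Finset.prod_ne_zero_iff.2 fun i _ => rowNorm_ne_zero hX i)

lemma trace_BN_mul_transpose (hX : X.det ≠ 0) : (BN X * (BN X)ᵀ).trace = d := by
  have hdiag (i : Fin d) : (BN X * (BN X)ᵀ) i i = 1 := by
    have h : (BN X * (BN X)ᵀ) i i = (X * Xᵀ) i i / rowNorm X i ^ 2 := by
      simp only [mul_apply, transpose_apply, BN, of_apply, Finset.sum_div, div_mul_div_comm,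
        pow_two]
    rw [h, ← rowNorm_sq, div_self (pow_ne_zero 2 (rowNorm_ne_zero hX i))]
  simp [trace, hdiag]

lemma isoGap_mul_of_orthogonal {W : Matrix (Fin d) (Fin d) ℝ} (hW : Wᵀ * W = 1)
    (X : Matrix (Fin d) (Fin d) ℝ) : isoGap (W * X) = isoGap X := by
  have hgram : (W * X)ᵀ * (W * X) = Xᵀ * X := by
    rw [transpose_mul, Matrix.mul_assoc, ← Matrix.mul_assoc Wᵀ, hW, Matrix.one_mul]
  rw [isoGap, isoGap, hgram]

lemma normalizedGram_mul_of_orthogonal {W : Matrix (Fin d) (Fin d) ℝ} (hW : Wᵀ * W = 1)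
    (X : Matrix (Fin d) (Fin d) ℝ) :
    normalizedGram (W * X) = W * normalizedGram X * Wᵀ := by
  have hgram : W * X * (W * X)ᵀ = W * (X * Xᵀ) * Wᵀ := by
    simp only [transpose_mul, Matrix.mul_assoc]
  have htrace : (W * (X * Xᵀ) * Wᵀ).trace = (X * Xᵀ).trace := by
    rw [trace_mul_comm, ← Matrix.mul_assoc, hW, Matrix.one_mul]
  rw [normalizedGram, normalizedGram, hgram, htrace, Matrix.mul_smul, Matrix.smul_mul]

variable [NeZero d]

lemma trace_mul_transpose_pos (hX : X.det ≠ 0) : 0 < (X * Xᵀ).trace :=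
  (posDef_mul_transpose hX).trace_pos

lemma posDef_normalizedGram (hX : X.det ≠ 0) : (normalizedGram X).PosDef :=
  (posDef_mul_transpose hX).smul
    (div_pos (Nat.cast_pos.2 (NeZero.pos d)) (trace_mul_transpose_pos hX))

lemma trace_normalizedGram (hX : X.det ≠ 0) : (normalizedGram X).trace = d := by
  rw [normalizedGram, trace_smul, smul_eq_mul, div_mul_cancel₀ _ (trace_mul_transpose_pos hX).ne']

lemma isoGap_eq_neg_log_det_normalizedGram (hX : X.det ≠ 0) :
    isoGap X = -(1 / d * Real.log (normalizedGram X).det) := by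
  have hscale : 0 ≤ (d : ℝ) / (X * Xᵀ).trace := by
    have := trace_mul_transpose_pos hX
    positivity
  have hroot : (normalizedGram X).det ^ (1 / d : ℝ) =
      (X * Xᵀ).det ^ (1 / d : ℝ) / (1 / d * (X * Xᵀ).trace) := by
    rw [normalizedGram, det_smul, Fintype.card_fin,
      Real.mul_rpow (pow_nonneg hscale d) (posDef_mul_transpose hX).det_pos.le, one_div,
      Real.pow_rpow_inv_natCast hscale (NeZero.ne d)]
    field_simp
  rw [isoGap, trace_mul_comm Xᵀ, det_mul_comm Xᵀ, ← hroot,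
    Real.log_rpow (posDef_normalizedGram hX).det_pos]

lemma isoGap_nonneg (hX : X.det ≠ 0) : 0 ≤ isoGap X := by
  have hlog := log_det_le_trace_sub_card (posDef_normalizedGram hX)
  rw [trace_normalizedGram hX, Fintype.card_fin, sub_self] at hlog
  rw [isoGap_eq_neg_log_det_normalizedGram hX, ← mul_neg]
  exact mul_nonneg (by positivity) (neg_nonneg.2 hlog)

lemma det_normalizedGram_BN (hX : X.det ≠ 0) :
    (normalizedGram (BN X)).det = (normalizedGram X).det / ∏ i, normalizedGram X i i := by
  have hd : (d : ℝ) ≠ 0 := NeZero.ne _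
  have htr := trace_mul_transpose_pos hX
  have hscale : ((d : ℝ) / (X * Xᵀ).trace) ^ d ≠ 0 := by positivity
  have hprod : ∏ i, normalizedGram X i i =
      (d / (X * Xᵀ).trace) ^ d * (∏ i, rowNorm X i) ^ 2 := by
    simp only [normalizedGram, Matrix.smul_apply, smul_eq_mul, ← rowNorm_sq,
      Finset.prod_mul_distrib, Finset.prod_pow, Finset.prod_const, Finset.card_univ,
      Fintype.card_fin]
  rw [hprod, normalizedGram, normalizedGram, trace_BN_mul_transpose hX, div_self hd, one_smul,
    det_smul, Fintype.card_fin, mul_div_mul_left _ _ hscale, det_mul, det_mul, det_transpose,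
    det_transpose, det_BN, div_mul_div_comm, pow_two]

lemma isoGap_BN (hX : X.det ≠ 0) :
    isoGap (BN X) = isoGap X + 1 / d * ∑ i, Real.log (normalizedGram X i i) := by
  have hpos := posDef_normalizedGram hX
  have hdiag (i : Fin d) : normalizedGram X i i ≠ 0 := hpos.diag_pos.ne'
  rw [isoGap_eq_neg_log_det_normalizedGram (det_BN_ne_zero hX),
    isoGap_eq_neg_log_det_normalizedGram hX, det_normalizedGram_BN hX,
    Real.log_div hpos.det_pos.ne' (Finset.prod_ne_zero_iff.2 fun i _ => hdiag i),
    Real.log_prod fun i _ => hdiag i]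
  ring

lemma isoGap_BN_le (hX : X.det ≠ 0) :
    isoGap (BN X) ≤ isoGap X - 1 / (2 * d ^ 2) * (∑ i, normalizedGram X i i ^ 2 - d) := by
  have hd : (1 : ℝ) ≤ d := Nat.one_le_cast.2 (NeZero.pos d)
  have hpos := posDef_normalizedGram hX
  have hsum : ∑ i, normalizedGram X i i = d := trace_normalizedGram hX
  have hlog (i : Fin d) : Real.log (normalizedGram X i i) ≤
      (normalizedGram X i i - 1) - (normalizedGram X i i - 1) ^ 2 / (2 * d) := by
    refine log_le_sub_one_sub_sq_div hd hpos.diag_pos ?_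
    rw [← hsum]
    exact Finset.single_le_sum (f := fun i => normalizedGram X i i)
      (fun i _ => hpos.diag_pos.le) (Finset.mem_univ i)
  have hsq : ∑ i, (normalizedGram X i i - 1) ^ 2 = ∑ i, normalizedGram X i i ^ 2 - d := by
    simp only [sub_sq, Finset.sum_add_distrib, Finset.sum_sub_distrib, mul_one, one_pow,
      ← Finset.mul_sum, hsum, Finset.sum_const, Finset.card_univ, Fintype.card_fin, nsmul_eq_mul]
    ring
  calc isoGap (BN X) = isoGap X + 1 / d * ∑ i, Real.log (normalizedGram X i i) := isoGap_BN hX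
    _ ≤ isoGap X + 1 / d * ∑ i,
          ((normalizedGram X i i - 1) - (normalizedGram X i i - 1) ^ 2 / (2 * d)) := by
        gcongr with i
        exact hlog i
    _ = isoGap X - 1 / (2 * d ^ 2) * (∑ i, normalizedGram X i i ^ 2 - d) := by
        rw [Finset.sum_sub_distrib, ← Finset.sum_div, hsq, Finset.sum_sub_distrib, hsum]
        simp only [Finset.sum_const, Finset.card_univ, Fintype.card_fin, nsmul_eq_mul, mul_one]
        field_simp
        ring

lemma min_mul_isoGap_le_trace_normalizedGram_sq (hX : X.det ≠ 0) :
    min (1 / 4) (d * isoGap X) ≤ (normalizedGram X * normalizedGram X).trace - d := by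
  have h := min_neg_log_det_le_trace_mul_self_sub_card (posDef_normalizedGram hX).isHermitian
    (by rw [trace_normalizedGram hX, Fintype.card_fin])
  have hgap : d * isoGap X = -Real.log (normalizedGram X).det := by
    rw [isoGap_eq_neg_log_det_normalizedGram hX, mul_neg, ← mul_assoc,
      mul_one_div_cancel (NeZero.ne _), one_mul]
  rwa [Fintype.card_fin, ← hgap] at h

end IsometryGap

instance matrixBorelSpace {d : ℕ} : BorelSpace (Matrix (Fin d) (Fin d) ℝ) :=
  inferInstanceAs (BorelSpace (Fin d → Fin d → ℝ))

namespace IsHaarOrthogonal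

variable {d : ℕ} {μ : Measure (Matrix (Fin d) (Fin d) ℝ)}

lemma ae_transpose_mul_self (hμ : IsHaarOrthogonal μ) : ∀ᵐ W ∂μ, Wᵀ * W = 1 := hμ.2.1

lemma measurePreserving_mul_right (hμ : IsHaarOrthogonal μ) {U : Matrix (Fin d) (Fin d) ℝ}
    (hU : Uᵀ * U = 1) : MeasurePreserving (fun W => W * U) μ μ :=
  ⟨(by fun_prop : Continuous fun W : Matrix (Fin d) (Fin d) ℝ => W * U).measurable,
    (hμ.2.2 U hU).2⟩

lemma integrable_of_continuous (hμ : IsHaarOrthogonal μ)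
    {f : Matrix (Fin d) (Fin d) ℝ → ℝ} (hf : Continuous f) : Integrable f μ := by
  have := hμ.1
  let K : Set (Matrix (Fin d) (Fin d) ℝ) :=
    Set.univ.pi fun _ => Set.univ.pi fun _ => Metric.closedBall 0 1
  have hK : IsCompact K :=
    isCompact_univ_pi fun _ => isCompact_univ_pi fun _ => isCompact_closedBall 0 1
  obtain ⟨C, hC⟩ := hK.exists_bound_of_continuousOn hf.continuousOn
  refine Integrable.of_bound hf.aestronglyMeasurable C ?_
  filter_upwards [hμ.ae_transpose_mul_self] with W hW
  refine hC W fun i _ j _ => mem_closedBall_zero_iff.2 ?_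
  exact entry_norm_bound_of_unitary ((mem_orthogonalGroup_iff' (Fin d) ℝ).2 hW) i j

lemma integral_comp_mulVec_eq (hμ : IsHaarOrthogonal μ) {f : (Fin d → ℝ) → ℝ}
    (hf : Continuous f) {v w : Fin d → ℝ} (h : v ⬝ᵥ v = w ⬝ᵥ w) :
    ∫ W, f (W *ᵥ v) ∂μ = ∫ W, f (W *ᵥ w) ∂μ := by
  obtain ⟨U, hU, rfl⟩ := exists_orthogonal_mulVec_eq h
  have hmap := hμ.measurePreserving_mul_right hU
  have hcont : Continuous fun W : Matrix (Fin d) (Fin d) ℝ => f (W *ᵥ v) := by fun_prop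
  rw [← hmap.map_eq, integral_map hmap.aemeasurable hcont.aestronglyMeasurable, hmap.map_eq]
  simp only [mulVec_mulVec]

lemma integral_mulVec_pow_four (hμ : IsHaarOrthogonal μ) (i : Fin d) (v : Fin d → ℝ) :
    ∫ W, (W *ᵥ v) i ^ 4 ∂μ = (∫ W, W i i ^ 4 ∂μ) * (v ⬝ᵥ v) ^ 2 := by
  set s := Real.sqrt (v ⬝ᵥ v)
  have hs : s ^ 2 = v ⬝ᵥ v := Real.sq_sqrt (Finset.sum_nonneg fun j _ => mul_self_nonneg (v j))
  have hnorm : v ⬝ᵥ v = Pi.single i s ⬝ᵥ Pi.single i s := by simp [← hs, pow_two]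
  calc ∫ W, (W *ᵥ v) i ^ 4 ∂μ = ∫ W, (W *ᵥ Pi.single i s) i ^ 4 ∂μ :=
        hμ.integral_comp_mulVec_eq (f := fun x => x i ^ 4) (by fun_prop) hnorm
    _ = ∫ W, W i i ^ 4 * (v ⬝ᵥ v) ^ 2 ∂μ := by
        simp only [mulVec_single, Pi.smul_apply, col_apply, op_smul_eq_mul, mul_pow, ← hs,
          ← pow_mul]
    _ = (∫ W, W i i ^ 4 ∂μ) * (v ⬝ᵥ v) ^ 2 := integral_mul_const _ _

/-- Polarization: apply the pure fourth moment to `v + w` and `v - w` and add. -/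
lemma integral_mulVec_sq_mul_mulVec_sq (hμ : IsHaarOrthogonal μ) (i : Fin d) (v w : Fin d → ℝ) :
    ∫ W, (W *ᵥ v) i ^ 2 * (W *ᵥ w) i ^ 2 ∂μ =
      (∫ W, W i i ^ 4 ∂μ) / 3 * ((v ⬝ᵥ v) * (w ⬝ᵥ w) + 2 * (v ⬝ᵥ w) ^ 2) := by
  have hfour (u : Fin d → ℝ) :
      Integrable (fun W : Matrix (Fin d) (Fin d) ℝ => (W *ᵥ u) i ^ 4) μ :=
    hμ.integrable_of_continuous (by fun_prop)
  have hpolar (W : Matrix (Fin d) (Fin d) ℝ) : (W *ᵥ v) i ^ 2 * (W *ᵥ w) i ^ 2 =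
      ((W *ᵥ (v + w)) i ^ 4 + (W *ᵥ (v - w)) i ^ 4
        - 2 * ((W *ᵥ v) i ^ 4 + (W *ᵥ w) i ^ 4)) / 12 := by
    simp only [mulVec_add, mulVec_sub, Pi.add_apply, Pi.sub_apply]
    ring
  simp only [hpolar]
  rw [integral_div, integral_sub (by fun_prop) (by fun_prop), integral_const_mul,
    integral_add (hfour _) (hfour _), integral_add (hfour _) (hfour _)]
  simp only [hμ.integral_mulVec_pow_four, add_dotProduct, dotProduct_add, sub_dotProduct,
    dotProduct_sub, dotProduct_comm w v]
  ring

lemma integral_diag_conj_sq_eq_fourth_moment_mul (hμ : IsHaarOrthogonal μ) (i : Fin d)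
    {A : Matrix (Fin d) (Fin d) ℝ} (hA : A.IsHermitian) :
    ∫ W, (W * A * Wᵀ) i i ^ 2 ∂μ =
      (∫ W, W i i ^ 4 ∂μ) / 3 * (A.trace ^ 2 + 2 * (A * A).trace) := by
  obtain ⟨u, hu, hdiag⟩ := exists_orthonormal_diag_conj_eq_sum (m := Fin d) hA
  have htrace : A.trace = ∑ k, hA.eigenvalues k := hA.trace_eq_sum_eigenvalues
  rw [htrace, trace_mul_self_eq_sum_eigenvalues_sq hA]
  set l := hA.eigenvalues
  set c := (∫ W, W i i ^ 4 ∂μ) / 3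
  have hexpand (W : Matrix (Fin d) (Fin d) ℝ) : (W * A * Wᵀ) i i ^ 2 =
      ∑ k, ∑ m, l k * l m * ((W *ᵥ u k) i ^ 2 * (W *ᵥ u m) i ^ 2) := by
    rw [hdiag, pow_two, Finset.sum_mul_sum]
    exact Finset.sum_congr rfl fun k _ => Finset.sum_congr rfl fun m _ => by ring
  have hint (k m : Fin d) : Integrable (fun W : Matrix (Fin d) (Fin d) ℝ =>
      l k * l m * ((W *ᵥ u k) i ^ 2 * (W *ᵥ u m) i ^ 2)) μ :=
    hμ.integrable_of_continuous (by fun_prop)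
  calc ∫ W, (W * A * Wᵀ) i i ^ 2 ∂μ
      = ∫ W, ∑ k, ∑ m, l k * l m * ((W *ᵥ u k) i ^ 2 * (W *ᵥ u m) i ^ 2) ∂μ := by
        simp only [hexpand]
    _ = ∑ k, ∑ m, l k * l m * ∫ W, (W *ᵥ u k) i ^ 2 * (W *ᵥ u m) i ^ 2 ∂μ := by
        rw [integral_finsetSum _ fun k _ => integrable_finsetSum _ fun m _ => hint k m]
        simp only [integral_finsetSum _ fun m _ => hint _ m, integral_const_mul]
    _ = ∑ k, ∑ m, (c * (l k * l m) + if k = m then 2 * c * l k ^ 2 else 0) := by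
        refine Finset.sum_congr rfl fun k _ => Finset.sum_congr rfl fun m _ => ?_
        rw [hμ.integral_mulVec_sq_mul_mulVec_sq, hu, hu, hu]
        rcases eq_or_ne k m with rfl | hkm
        · simp only [if_true]
          ring
        · simp only [if_true, if_neg hkm]
          ring
    _ = c * ((∑ k, l k) ^ 2 + 2 * ∑ k, l k ^ 2) := by
        simp only [Finset.sum_add_distrib, Finset.sum_ite_eq, Finset.mem_univ, if_true,
          ← Finset.mul_sum, pow_two (∑ k, l k), Finset.sum_mul_sum]
        ring

/-- The case `A = 1`, where the left-hand side is `1`, determines the fourth moment of `W i i`. -/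
lemma integral_diag_conj_sq (hμ : IsHaarOrthogonal μ) (i : Fin d)
    {A : Matrix (Fin d) (Fin d) ℝ} (hA : A.IsHermitian) :
    ∫ W, (W * A * Wᵀ) i i ^ 2 ∂μ = (A.trace ^ 2 + 2 * (A * A).trace) / (d * (d + 2)) := by
  have := hμ.1
  have hd : (0 : ℝ) < d := Nat.cast_pos.2 (Fin.pos i)
  have hone : ∫ W, (W * (1 : Matrix (Fin d) (Fin d) ℝ) * Wᵀ) i i ^ 2 ∂μ = 1 := by
    rw [integral_congr_ae (g := fun _ => (1 : ℝ))]
    · simp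
    · filter_upwards [hμ.ae_transpose_mul_self] with W hW
      rw [Matrix.mul_one, mul_eq_one_comm.1 hW, one_apply_eq, one_pow]
  have hmoment : (∫ W, W i i ^ 4 ∂μ) / 3 = 1 / (d * (d + 2)) := by
    rw [hμ.integral_diag_conj_sq_eq_fourth_moment_mul i isHermitian_one, Matrix.one_mul,
      trace_one, Fintype.card_fin] at hone
    rw [eq_div_iff (by positivity)]
    linarith
  rw [hμ.integral_diag_conj_sq_eq_fourth_moment_mul i hA, hmoment, one_div_mul_eq_div]

variable [NeZero d] {X : Matrix (Fin d) (Fin d) ℝ}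

lemma integral_isoGap_BN_mul_le (hμ : IsHaarOrthogonal μ) (hX : X.det ≠ 0) :
    ∫ W, isoGap (BN (W * X)) ∂μ ≤
      isoGap X - ((normalizedGram X * normalizedGram X).trace - d) / (d ^ 2 * (d + 2)) := by
  have := hμ.1
  have hd : (0 : ℝ) < d := Nat.cast_pos.2 (NeZero.pos d)
  set G := normalizedGram X
  have hint (i : Fin d) :
      Integrable (fun W : Matrix (Fin d) (Fin d) ℝ => (W * G * Wᵀ) i i ^ 2) μ :=
    hμ.integrable_of_continuous (by fun_prop)
  have hint' : Integrable (fun W : Matrix (Fin d) (Fin d) ℝ =>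
      1 / (2 * (d : ℝ) ^ 2) * (∑ i, (W * G * Wᵀ) i i ^ 2 - d)) μ :=
    hμ.integrable_of_continuous (by fun_prop)
  have hdet {W : Matrix (Fin d) (Fin d) ℝ} (hW : Wᵀ * W = 1) : (W * X).det ≠ 0 := by
    rw [det_mul]
    exact mul_ne_zero (det_ne_zero_of_left_inverse hW) hX
  calc ∫ W, isoGap (BN (W * X)) ∂μ
      ≤ ∫ W, (isoGap X - 1 / (2 * d ^ 2) * (∑ i, (W * G * Wᵀ) i i ^ 2 - d)) ∂μ := by
        refine integral_mono_of_nonneg ?_ ((integrable_const _).sub hint') ?_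
        · filter_upwards [hμ.ae_transpose_mul_self] with W hW
          exact isoGap_nonneg (det_BN_ne_zero (hdet hW))
        · filter_upwards [hμ.ae_transpose_mul_self] with W hW
          have h := isoGap_BN_le (hdet hW)
          rwa [isoGap_mul_of_orthogonal hW, normalizedGram_mul_of_orthogonal hW] at h
    _ = isoGap X - 1 / (2 * d ^ 2) * (∑ i, ∫ W, (W * G * Wᵀ) i i ^ 2 ∂μ - d) := by
        rw [integral_sub (integrable_const _) hint', integral_const_mul,
          integral_sub (integrable_finsetSum _ fun i _ => hint i) (integrable_const _),
          integral_finsetSum _ fun i _ => hint i]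
        simp
    _ = isoGap X - ((G * G).trace - d) / (d ^ 2 * (d + 2)) := by
        simp only [hμ.integral_diag_conj_sq _ (posDef_normalizedGram hX).isHermitian,
          trace_normalizedGram hX, Finset.sum_const, Finset.card_univ, Fintype.card_fin,
          nsmul_eq_mul, G]
        field_simp
        ring

lemma integral_isoGap_BN_mul_le_sub_min (hμ : IsHaarOrthogonal μ) (hX : X.det ≠ 0) :
    ∫ W, isoGap (BN (W * X)) ∂μ ≤
      isoGap X - min (1 / 4) (d * isoGap X) / (d ^ 2 * (d + 2)) := by
  refine (hμ.integral_isoGap_BN_mul_le hX).trans ?_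
  gcongr
  exact min_mul_isoGap_le_trace_normalizedGram_sq hX

end IsHaarOrthogonal

theorem isoGap_one_step_conditional_general {d : ℕ} (hd : 2 ≤ d)
    (X : Matrix (Fin d) (Fin d) ℝ) (hX : X.det ≠ 0)
    (μ : Measure (Matrix (Fin d) (Fin d) ℝ)) (hμ : IsHaarOrthogonal μ) :
    (isoGap X ≤ 1 / (16 * d) →
        (∫ W, isoGap (BN (W * X)) ∂μ) ≤ isoGap X * (1 - 1 / (2 * (d : ℝ) ^ 2))) ∧
      (isoGap X > 1 / (16 * d) →
        (∫ W, isoGap (BN (W * X)) ∂μ) ≤ isoGap X - 1 / (32 * (d : ℝ) ^ 3)) := by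
  have : NeZero d := ⟨by omega⟩
  have hd2 : (2 : ℝ) ≤ d := by exact_mod_cast hd
  have hgap : 0 ≤ isoGap X := isoGap_nonneg hX
  have hstep : ∫ W, isoGap (BN (W * X)) ∂μ ≤
      isoGap X - min (1 / 4) (d * isoGap X) / (2 * d ^ 3) := by
    refine (hμ.integral_isoGap_BN_mul_le_sub_min hX).trans ?_
    have hden : (d : ℝ) ^ 2 * (d + 2) ≤ 2 * d ^ 3 := by nlinarith [sq_nonneg (d : ℝ)]
    gcongr
  constructor <;> intro h
  · rw [le_div_iff₀ (by positivity)] at h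
    rw [min_eq_right (by linarith)] at hstep
    refine hstep.trans_eq ?_
    field_simp
  · rw [gt_iff_lt, div_lt_iff₀ (by positivity)] at h
    have hmin : 1 / 16 ≤ min (1 / 4) (d * isoGap X) := le_min (by norm_num) (by linarith)
    calc ∫ W, isoGap (BN (W * X)) ∂μ
        ≤ isoGap X - min (1 / 4) (d * isoGap X) / (2 * d ^ 3) := hstep
      _ ≤ isoGap X - (1 / 16) / (2 * d ^ 3) := by gcongr
      _ = isoGap X - 1 / (32 * (d : ℝ) ^ 3) := by field_simp; ring

/-- one-step isometry gap decrease for the batch-normalized layer with a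
Haar orthogonal weight: (i) if `φ(X) ≤ 1/(16d)` then
`E[φ(BN(WX))] ≤ φ(X)(1 − 1/(2d²))`; (ii) if `φ(X) > 1/(16d)` then
`E[φ(BN(WX))] ≤ φ(X) − 1/(32d³)`. -/
theorem isoGap_one_step_conditional {d : ℕ} (hd : 2 ≤ d)
    (X : Matrix (Fin d) (Fin d) ℝ) (hX : X.det ≠ 0)
    (hrows : ∀ i, ∑ j, X i j ^ 2 = 1)
    (μ : Measure (Matrix (Fin d) (Fin d) ℝ)) (hμ : IsHaarOrthogonal μ) :
    (isoGap X ≤ 1 / (16 * d) →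
        (∫ W, isoGap (BN (W * X)) ∂μ) ≤ isoGap X * (1 - 1 / (2 * (d : ℝ) ^ 2))) ∧
      (isoGap X > 1 / (16 * d) →
        (∫ W, isoGap (BN (W * X)) ∂μ) ≤ isoGap X - 1 / (32 * (d : ℝ) ^ 3)) := by
  exact isoGap_one_step_conditional_general hd X hX μ hμ
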